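/- First inversion relation for intertwining vectors: for all a, b, c ∈ ℤ with |a−b| = |b−c| = 1 and all u ∈ ℂ with [u] ≠ 0 and [b] ≠ 0, one has Σ_{ε ∈ {+1,−1}} ψ*_ε(u)^a_b · ψ_ε(u)^b_c = 1 if a = c, and = 0 if a ≠ c. -/

import Mathlib

noncomputable section

open Complex Finset

namespace Ell

/-- `x^s = exp(-iπ s /(r τ))`. -/
def xp (τ : ℂ) (r : ℝ) (s : ℂ) : ℂ :=
  Complex.exp (-Complex.I * (Real.pi : ℂ) * s / ((r : ℂ) * τ))

/-- `Θ_p(z) = ∏_{j ≥ 0} (1 - z p^j)(1 - p^{j+1}/z)(1 - p^{j+1})`. -/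
def Theta (p z : ℂ) : ℂ :=
  ∏' j : ℕ, ((1 - z * p ^ j) * (1 - p ^ (j + 1) / z) * (1 - p ^ (j + 1)))

/-- The bracket `[u] = x^{u²/r - u} Θ_p(x^{2u})` with `p = x^{2r}`. -/
def br (τ : ℂ) (r : ℝ) (u : ℂ) : ℂ :=
  xp τ r (u ^ 2 / (r : ℂ) - u) * Theta (xp τ r (2 * (r : ℂ))) (xp τ r (2 * u))

/-- Elliptic shifted factorial `[u]_n = ∏_{j=0}^{n-1} [u+j]`. -/
def brF (τ : ℂ) (r : ℝ) (u : ℂ) (n : ℕ) : ℂ :=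
  ∏ j ∈ Finset.range n, br τ r (u + (j : ℂ))

/-- Elliptic binomial coefficient `C_n^k(α,β,γ)`. -/
def Cnk (τ : ℂ) (r : ℝ) (k n : ℕ) (α β γ : ℂ) : ℂ :=
  brF τ r 1 k / (brF τ r 1 n * brF τ r 1 (k - n)) *
    (brF τ r (α - γ) n * brF τ r (α + γ + (k : ℂ) - (n : ℂ)) n *
      brF τ r (α - β) (k - n) * brF τ r (α + β + (n : ℂ)) (k - n)) /
    (brF τ r (β - γ + (n : ℂ) - (k : ℂ)) n * brF τ r (γ - β - (n : ℂ)) (k - n) *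
      brF τ r (β + γ) k)

/-- The elliptic 6j-symbol `R_n^m(α,β,γ,δ;k)`. -/
def Rnm (τ : ℂ) (r : ℝ) (k n m : ℕ) (α β γ δ : ℂ) : ℂ :=
  ∑ j ∈ Finset.range (min n m + 1),
    Cnk τ r n j α γ (β + (k : ℂ) - (n : ℂ)) * Cnk τ r (k - j) (m - j) β (γ + (j : ℂ)) δ

/-- Terminating very-well-poised elliptic hypergeometric sum with explicit
truncation `N`:  `Σ_{j=0}^N ([u₀+2j]/[u₀]) ([u₀]_j/[1]_j) ∏ᵢ [uᵢ]_j/[u₀+1-uᵢ]_j`. -/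
def Vsum (τ : ℂ) (r : ℝ) (u₀ : ℂ) (us : List ℂ) (N : ℕ) : ℂ :=
  ∑ j ∈ Finset.range (N + 1),
    br τ r (u₀ + 2 * (j : ℂ)) / br τ r u₀ * (brF τ r u₀ j / brF τ r 1 j) *
      (us.map fun ui => brF τ r ui j / brF τ r (u₀ + 1 - ui) j).prod

/-- "Every bracket appearing in a denominator of `C_n^k(·,β,γ)` is nonzero". -/
def CdenomNZ (τ : ℂ) (r : ℝ) (k n : ℕ) (β γ : ℂ) : Prop :=
  brF τ r 1 n ≠ 0 ∧ brF τ r 1 (k - n) ≠ 0 ∧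
    brF τ r (β - γ + (n : ℂ) - (k : ℂ)) n ≠ 0 ∧
    brF τ r (γ - β - (n : ℂ)) (k - n) ≠ 0 ∧ brF τ r (β + γ) k ≠ 0

/-- "Every bracket appearing in a denominator of `R_n^m(α,β,γ,δ;k)` is nonzero". -/
def RdenomNZ (τ : ℂ) (r : ℝ) (k n m : ℕ) (β γ δ : ℂ) : Prop :=
  ∀ j ≤ min n m,
    CdenomNZ τ r n j γ (β + (k : ℂ) - (n : ℂ)) ∧
      CdenomNZ τ r (k - j) (m - j) (γ + (j : ℂ)) δ

/-- Jacobi theta `ϑ₁(v|σ)`. -/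
def th1 (v σ : ℂ) : ℂ :=
  2 * Complex.exp (2 * (Real.pi : ℂ) * Complex.I * σ / 8) *
    (∏' n : ℕ, (1 - Complex.exp (2 * (Real.pi : ℂ) * Complex.I * σ) ^ (n + 1))) *
    Complex.sin ((Real.pi : ℂ) * v) *
    ∏' n : ℕ,
      (1 - 2 * Complex.exp (2 * (Real.pi : ℂ) * Complex.I * σ) ^ (n + 1) *
            Complex.cos (2 * (Real.pi : ℂ) * v) +
        Complex.exp (2 * (Real.pi : ℂ) * Complex.I * σ) ^ (2 * (n + 1)))

/-- Jacobi theta `ϑ₀(v|σ)`. -/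
def th0 (v σ : ℂ) : ℂ :=
  -Complex.I * Complex.exp ((Real.pi : ℂ) * Complex.I * (v + σ / 4)) * th1 (v + σ / 2) σ

/-- Jacobi theta `ϑ₂(v|σ)`. -/
def th2 (v σ : ℂ) : ℂ := th1 (v + 1 / 2) σ

/-- Jacobi theta `ϑ₃(v|σ)`. -/
def th3 (v σ : ℂ) : ℂ :=
  Complex.exp ((Real.pi : ℂ) * Complex.I * (v + σ / 4)) * th1 (v + (σ + 1) / 2) σ

/-- Intertwining vector component `ψ_ε(u)^a_b`, `ε ∈ {1, -1}`. -/
def psi (τ : ℂ) (r : ℝ) (u : ℂ) (ε : ℤ) (a b : ℤ) : ℂ :=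
  if ε = 1 then th0 ((((a : ℂ) - (b : ℂ)) * u + (a : ℂ)) / (2 * (r : ℂ))) (τ / 2)
  else th3 ((((a : ℂ) - (b : ℂ)) * u + (a : ℂ)) / (2 * (r : ℂ))) (τ / 2)

/-- The constant `C = x^{-r/4} e^{-iπ/4} τ^{1/2}`. -/
def Cc (τ : ℂ) (r : ℝ) : ℂ :=
  xp τ r (-(r : ℂ) / 4) * Complex.exp (-(Real.pi : ℂ) * Complex.I / 4) * τ ^ (1 / 2 : ℂ)

/-- Dual intertwining vector component `ψ*_ε(u)^a_b = -ε(a-b) C² ψ_{-ε}(u-1)^a_b/(2[b][u])`. -/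
def psiStar (τ : ℂ) (r : ℝ) (u : ℂ) (ε : ℤ) (a b : ℤ) : ℂ :=
  -(ε : ℂ) * ((a : ℂ) - (b : ℂ)) * Cc τ r ^ 2 * psi τ r (u - 1) (-ε) a b /
    (2 * br τ r (b : ℂ) * br τ r u)

/-- Sign attached to a boolean. -/
def sg (b : Bool) : ℤ := if b then 1 else -1

/-- Canonical path from `a`: up for `j ≤ n`, down afterwards. -/
def cpathZ (a n : ℤ) (j : ℕ) : ℤ := if (j : ℤ) ≤ n then a + j else a + 2 * n - j

/-- Admissibility: `a - b ∈ {-k, -k+2, …, k}`. -/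
def adm (k : ℕ) (a b : ℤ) : Prop := (a - b).natAbs ≤ k ∧ (a - b - (k : ℤ)) % 2 = 0

instance (k : ℕ) (a b : ℤ) : Decidable (adm k a b) := by unfold adm; infer_instance

/-- Fused intertwining vector component `ψ^{(k)}_μ(u)^a_b` (zero if `a,b` not admissible). -/
def psiF (τ : ℂ) (r : ℝ) (k : ℕ) (μ : ℤ) (u : ℂ) (a b : ℤ) : ℂ :=
  if adm k a b then
    ∑ ε ∈ Finset.univ.filter fun ε : Fin k → Bool => (∑ j, sg (ε j)) = μ,
      ∏ j : Fin k,
        psi τ r (u + (k : ℂ) - (((j : ℕ) + 1 : ℕ) : ℂ)) (sg (ε j))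
          (cpathZ a (((k : ℤ) - (a - b)) / 2) (j : ℕ))
          (cpathZ a (((k : ℤ) - (a - b)) / 2) ((j : ℕ) + 1))
  else 0

/-- Partial-sum path attached to a sign sequence `δ`, starting at `a`. -/
def spath (k : ℕ) (a : ℤ) (δ : Fin k → Bool) (j : ℕ) : ℤ :=
  a + ∑ i ∈ Finset.range j, if h : i < k then sg (δ ⟨i, h⟩) else 0

/-- Fused dual intertwining vector component `ψ*^{(k)}_μ(u)^b_a`
(sum over all admissible paths from `a` to `b`; zero if not admissible). -/
def psiStarF (τ : ℂ) (r : ℝ) (k : ℕ) (μ : ℤ) (u : ℂ) (b a : ℤ) : ℂ :=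
  if adm k a b then
    ∑ δ ∈ Finset.univ.filter fun δ : Fin k → Bool => (∑ j, sg (δ j)) = b - a,
      ∏ j : Fin k,
        psiStar τ r (u + (k : ℂ) - (((j : ℕ) + 1 : ℕ) : ℂ))
          (if ((j : ℕ) + 1 : ℤ) ≤ ((k : ℤ) + μ) / 2 then 1 else -1)
          (spath k a δ ((j : ℕ) + 1)) (spath k a δ (j : ℕ))
  else 0

/-- The `L`-matrix `L^{(k)}(a,b;c,d|u) = Σ_μ ψ*^{(k)}_μ(u)^d_c ψ^{(k)}_μ(u)^a_b`. -/
def Lk (τ : ℂ) (r : ℝ) (k : ℕ) (u : ℂ) (a b c d : ℤ) : ℂ :=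
  ∑ i ∈ Finset.range (k + 1),
    psiStarF τ r k ((k : ℤ) - 2 * (i : ℤ)) u d c * psiF τ r k ((k : ℤ) - 2 * (i : ℤ)) u a b

/-- Normalized face weight `W̄(a,b;d,c|u)` (arguments ordered (NW, NE; SW, SE)). -/
def Wb (τ : ℂ) (r : ℝ) (u : ℂ) (a b d c : ℤ) : ℂ :=
  if b = a + 1 ∧ d = a + 1 ∧ c = a + 2 then 1
  else if b = a - 1 ∧ d = a - 1 ∧ c = a - 2 then 1
  else if b = a + 1 ∧ d = a + 1 ∧ c = a then
    br τ r ((a : ℂ) - u) * br τ r 1 / (br τ r (a : ℂ) * br τ r (1 + u))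
  else if b = a - 1 ∧ d = a - 1 ∧ c = a then
    br τ r ((a : ℂ) + u) * br τ r 1 / (br τ r (a : ℂ) * br τ r (1 + u))
  else if b = a + 1 ∧ d = a - 1 ∧ c = a then
    br τ r ((a : ℂ) + 1) * br τ r u / (br τ r (a : ℂ) * br τ r (1 + u))
  else if b = a - 1 ∧ d = a + 1 ∧ c = a then
    br τ r ((a : ℂ) - 1) * br τ r u / (br τ r (a : ℂ) * br τ r (1 + u))
  else 0

/-- Sequence with prescribed endpoints `d`, `c` and free interior values `f`. -/
def seqI (k : ℕ) (d c : ℤ) (f : Fin (k - 1) → ℤ) (j : ℕ) : ℤ :=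
  if h0 : j = 0 then d
  else if hj : j < k then f ⟨j - 1, by omega⟩ else c

/-- Fused face weight `W^{(k,1)}(a,b;d,c|u)`. -/
def Wk1 (τ : ℂ) (r : ℝ) (k : ℕ) (u : ℂ) (a b d c : ℤ) : ℂ :=
  if adm k a b then
    ∑' f : Fin (k - 1) → ℤ,
      ∏ j ∈ Finset.range k,
        Wb τ r (u + (k : ℂ) - ((j : ℂ) + 1))
          (cpathZ a (((k : ℤ) - (a - b)) / 2) j)
          (cpathZ a (((k : ℤ) - (a - b)) / 2) (j + 1))
          (seqI k d c f j) (seqI k d c f (j + 1))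
  else 0

/-- Fused face weight `W^{(k,l)}(a,b;d,c|u)`. -/
def Wkl (τ : ℂ) (r : ℝ) (k l : ℕ) (u : ℂ) (a b d c : ℤ) : ℂ :=
  if adm l b c then
    ∑' g : Fin (l - 1) → ℤ,
      ∏ i ∈ Finset.range l,
        Wk1 τ r k (u - (l : ℂ) + ((i : ℂ) + 1))
          (seqI l a d g i) (cpathZ b (((l : ℤ) - (b - c)) / 2) i)
          (seqI l a d g (i + 1)) (cpathZ b (((l : ℤ) - (b - c)) / 2) (i + 1))
  else 0

/-- Eight-vertex weight `ā(u)`. -/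
def aw (τ : ℂ) (r : ℝ) (u : ℂ) : ℂ :=
  th2 (1 / (2 * (r : ℂ))) (τ / 2) * th2 (u / (2 * (r : ℂ))) (τ / 2) /
    (th2 0 (τ / 2) * th2 ((1 + u) / (2 * (r : ℂ))) (τ / 2))

/-- Eight-vertex weight `b̄(u)`. -/
def bw (τ : ℂ) (r : ℝ) (u : ℂ) : ℂ :=
  th2 (1 / (2 * (r : ℂ))) (τ / 2) * th1 (u / (2 * (r : ℂ))) (τ / 2) /
    (th2 0 (τ / 2) * th1 ((1 + u) / (2 * (r : ℂ))) (τ / 2))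

/-- Eight-vertex weight `c̄(u)`. -/
def cw (τ : ℂ) (r : ℝ) (u : ℂ) : ℂ :=
  th1 (1 / (2 * (r : ℂ))) (τ / 2) * th2 (u / (2 * (r : ℂ))) (τ / 2) /
    (th2 0 (τ / 2) * th1 ((1 + u) / (2 * (r : ℂ))) (τ / 2))

/-- Eight-vertex weight `d̄(u)`. -/
def dw (τ : ℂ) (r : ℝ) (u : ℂ) : ℂ :=
  -(th1 (1 / (2 * (r : ℂ))) (τ / 2) * th1 (u / (2 * (r : ℂ))) (τ / 2)) /
    (th2 0 (τ / 2) * th2 ((1 + u) / (2 * (r : ℂ))) (τ / 2))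

/-- The normalized eight-vertex `R`-matrix entry `R̄(u)_{(ε₁,ε₂),(ε₁',ε₂')}`. -/
def Rbar (τ : ℂ) (r : ℝ) (u : ℂ) (e1 e2 e1' e2' : ℤ) : ℂ :=
  if e1' = e1 ∧ e2' = e2 ∧ e1 = e2 then aw τ r u
  else if e1' = e1 ∧ e2' = e2 ∧ e1 = -e2 then bw τ r u
  else if e1' = e2 ∧ e2' = e1 ∧ e1 = -e2 then cw τ r u
  else if e1' = -e1 ∧ e2' = -e2 ∧ e1 = e2 then dw τ r u
  else 0

/-- Sklyanin standard-basis vector `v_+(z)`. -/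
def vp (τ z : ℂ) : ℂ := th3 (2 * z) (2 * τ) - th2 (2 * z) (2 * τ)

/-- Sklyanin standard-basis vector `v_-(z)`. -/
def vm (τ z : ℂ) : ℂ := th3 (2 * z) (2 * τ) + th2 (2 * z) (2 * τ)

/-!
The sum over `ε` is, up to the factor `-(a - b) C² / (2 [b] [u])`, the determinant
`ϑ₃(X) ϑ₀(Y) - ϑ₀(X) ϑ₃(Y)` at modulus `τ / 2` with `X = ((a - b)(u - 1) + a) / 2r` and
`Y = ((b - c) u + b) / 2r`. If `a ≠ c`, then `c = 2b - a` and `X = Y`, so it vanishes. If `a = c`,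
then `X` and `Y` are `(b ± (a - b) u) / 2r`, and the addition formula
`ϑ₃(x + y) ϑ₀(x - y) - ϑ₀(x + y) ϑ₃(x - y) = -2 ϑ₁(2x | τ) ϑ₁(2y | τ)` applies. Since the modular
transformation `τ ↦ -1 / τ` gives `[u] = C ϑ₁(u / r | τ)`, the result cancels the prefactor.

Both theta identities are read off the theta series. The passage from the products to the series is
the Jacobi triple product identity, the limit of the Gaussian binomial theorem for
`∏_{j < N} (1 - z pʲ)(1 - p^{j+1} / z)`.
-/

section GaussianBinomial

open scoped Topology
open Filter

/-- The `q`-Pochhammer symbol `(p; p)_n = (1 - p)(1 - p²)⋯(1 - pⁿ)`. -/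
def qPochhammer {R : Type*} [CommRing R] (p : R) (n : ℕ) : R :=
  ∏ j ∈ range n, (1 - p ^ (j + 1))

/-- The Gaussian binomial coefficient at `p`, defined by Pascal's rule so that it makes sense in
any commutative semiring, also where `qPochhammer p` vanishes. -/
def gaussBinom {R : Type*} [CommSemiring R] (p : R) : ℕ → ℕ → R
  | _, 0 => 1
  | 0, _ + 1 => 0
  | n + 1, k + 1 => gaussBinom p n (k + 1) + p ^ (n - k) * gaussBinom p n k

section CommSemiring

variable {R : Type*} [CommSemiring R] (p : R)

lemma gaussBinom_zero_right (n : ℕ) : gaussBinom p n 0 = 1 := by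
  cases n <;> rfl

lemma gaussBinom_succ_succ (n k : ℕ) :
    gaussBinom p (n + 1) (k + 1) = gaussBinom p n (k + 1) + p ^ (n - k) * gaussBinom p n k :=
  rfl

lemma gaussBinom_eq_zero_of_lt {n k : ℕ} (hnk : n < k) : gaussBinom p n k = 0 := by
  induction n generalizing k with
  | zero =>
    obtain ⟨k, rfl⟩ := Nat.exists_eq_succ_of_ne_zero hnk.ne'
    rfl
  | succ n ih =>
    obtain ⟨k, rfl⟩ := Nat.exists_eq_succ_of_ne_zero (Nat.ne_zero_of_lt hnk)
    rw [Nat.succ_eq_add_one, gaussBinom_succ_succ, ih (by omega), ih (by omega), mul_zero, add_zero]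

lemma gaussBinom_self (n : ℕ) : gaussBinom p n n = 1 := by
  induction n with
  | zero => rfl
  | succ n ih =>
    rw [gaussBinom_succ_succ, gaussBinom_eq_zero_of_lt p n.lt_succ_self, ih]
    simp

lemma gaussBinom_succ_succ' (n k : ℕ) :
    gaussBinom p (n + 1) (k + 1) = gaussBinom p n k + p ^ (k + 1) * gaussBinom p n (k + 1) := by
  induction n generalizing k with
  | zero => cases k <;> simp [gaussBinom]
  | succ n ih =>
    cases k with
    | zero =>
      conv_lhs => rw [gaussBinom_succ_succ, ih 0]
      conv_rhs => rw [gaussBinom_succ_succ]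
      simp only [gaussBinom_zero_right, Nat.sub_zero]
      ring
    | succ k =>
      conv_lhs => rw [gaussBinom_succ_succ, ih (k + 1), ih k]
      conv_rhs => rw [gaussBinom_succ_succ p n (k + 1), gaussBinom_succ_succ p n k]
      rw [Nat.add_sub_add_right]
      rcases lt_or_ge k n with hkn | hnk
      · obtain ⟨d, rfl⟩ := Nat.exists_eq_add_of_lt hkn
        rw [show k + d + 1 - k = d + 1 by omega, show k + d + 1 - (k + 1) = d by omega]
        ring
      · rw [gaussBinom_eq_zero_of_lt p (by omega : n < k + 1)]
        ring

lemma sum_gaussBinom_eq_add_sum_succ (n : ℕ) (f : ℕ → R) :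
    ∑ k ∈ range (n + 1), gaussBinom p n k * f k =
      f 0 + ∑ k ∈ range (n + 1), gaussBinom p n (k + 1) * f (k + 1) := by
  calc ∑ k ∈ range (n + 1), gaussBinom p n k * f k
      = ∑ k ∈ range (n + 2), gaussBinom p n k * f k := by
        rw [sum_range_succ _ (n + 1), gaussBinom_eq_zero_of_lt p n.lt_succ_self, zero_mul, add_zero]
    _ = f 0 + ∑ k ∈ range (n + 1), gaussBinom p n (k + 1) * f (k + 1) := by
        rw [sum_range_succ' _ (n + 1), gaussBinom_zero_right, one_mul, add_comm]

lemma sum_gaussBinom_succ (n : ℕ) (f : ℕ → R) :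
    ∑ k ∈ range (n + 2), gaussBinom p (n + 1) k * f k =
      ∑ k ∈ range (n + 1), gaussBinom p n k * (f k + p ^ (n - k) * f (k + 1)) := by
  simp only [mul_add, sum_add_distrib]
  rw [sum_range_succ', sum_gaussBinom_eq_add_sum_succ]
  simp only [gaussBinom_succ_succ, gaussBinom_zero_right, add_mul, sum_add_distrib, one_mul,
    mul_assoc, mul_left_comm]
  ring

lemma sum_gaussBinom_succ' (n : ℕ) (f : ℕ → R) :
    ∑ k ∈ range (n + 2), gaussBinom p (n + 1) k * f k =
      ∑ k ∈ range (n + 1), gaussBinom p n k * (p ^ k * f k + f (k + 1)) := by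
  simp only [mul_add, sum_add_distrib]
  rw [sum_range_succ', sum_gaussBinom_eq_add_sum_succ p n fun k => p ^ k * f k]
  simp only [gaussBinom_succ_succ', gaussBinom_zero_right, add_mul, sum_add_distrib, one_mul,
    mul_assoc, mul_left_comm, pow_zero]
  ring

end CommSemiring

section CommRing

variable {R : Type*} [CommRing R] (p : R)

lemma qPochhammer_succ (n : ℕ) : qPochhammer p (n + 1) = qPochhammer p n * (1 - p ^ (n + 1)) :=
  prod_range_succ _ n

lemma gaussBinom_add_mul_qPochhammer (m k : ℕ) :
    gaussBinom p (m + k) k * (qPochhammer p k * qPochhammer p m) = qPochhammer p (m + k) := by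
  induction m generalizing k with
  | zero => simp [gaussBinom_self, qPochhammer]
  | succ m ihm =>
    induction k with
    | zero => simp [gaussBinom_zero_right, qPochhammer]
    | succ k ihk =>
      have hm := ihm (k + 1)
      rw [show m + 1 + (k + 1) = m + k + 1 + 1 by ring, gaussBinom_succ_succ, qPochhammer_succ p k,
        qPochhammer_succ p (m + k + 1), qPochhammer_succ p m, show m + k + 1 - k = m + 1 by omega]
      rw [← add_assoc, qPochhammer_succ p k] at hm
      rw [add_right_comm, qPochhammer_succ p m] at ihk
      linear_combination (1 - p ^ (m + 1)) * hm + p ^ (m + 1) * (1 - p ^ (k + 1)) * ihk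

end CommRing

section NormedField

variable {𝕜 : Type*} [NormedField 𝕜] {p : 𝕜}

lemma one_sub_pow_succ_ne_zero (hp : ‖p‖ < 1) (n : ℕ) : 1 - p ^ (n + 1) ≠ 0 := by
  intro h
  have hlt : ‖p ^ (n + 1)‖ < 1 := by
    rw [norm_pow]
    exact pow_lt_one₀ (norm_nonneg p) hp n.succ_ne_zero
  rw [← sub_eq_zero.mp h, norm_one] at hlt
  exact lt_irrefl _ hlt

lemma qPochhammer_ne_zero (hp : ‖p‖ < 1) (n : ℕ) : qPochhammer p n ≠ 0 :=
  prod_ne_zero_iff.mpr fun j _ => one_sub_pow_succ_ne_zero hp j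

lemma gaussBinom_add_eq_div (hp : ‖p‖ < 1) (m k : ℕ) :
    gaussBinom p (m + k) k = qPochhammer p (m + k) / (qPochhammer p k * qPochhammer p m) :=
  eq_div_of_mul_eq (mul_ne_zero (qPochhammer_ne_zero hp k) (qPochhammer_ne_zero hp m))
    (gaussBinom_add_mul_qPochhammer p m k)

variable [CompleteSpace 𝕜]

lemma multipliable_one_sub_mul_pow (hp : ‖p‖ < 1) (z : 𝕜) :
    Multipliable fun j : ℕ => 1 - z * p ^ j := by
  simp only [sub_eq_add_neg]
  apply multipliable_one_add_of_summable
  simpa only [norm_neg, norm_mul, norm_pow] using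
    (summable_geometric_of_lt_one (norm_nonneg p) hp).mul_left ‖z‖

lemma multipliable_one_sub_mul_pow_succ (hp : ‖p‖ < 1) (z : 𝕜) :
    Multipliable fun j : ℕ => 1 - z * p ^ (j + 1) := by
  simpa only [pow_succ', mul_assoc] using multipliable_one_sub_mul_pow hp (z * p)

lemma multipliable_one_sub_pow_succ_div (hp : ‖p‖ < 1) (z : 𝕜) :
    Multipliable fun j : ℕ => 1 - p ^ (j + 1) / z := by
  simpa only [div_eq_inv_mul] using multipliable_one_sub_mul_pow_succ hp z⁻¹

lemma multipliable_one_sub_pow_succ (hp : ‖p‖ < 1) :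
    Multipliable fun j : ℕ => 1 - p ^ (j + 1) := by
  simpa only [div_one] using multipliable_one_sub_pow_succ_div hp 1

lemma tendsto_qPochhammer (hp : ‖p‖ < 1) :
    Tendsto (qPochhammer p) atTop (𝓝 (∏' j : ℕ, (1 - p ^ (j + 1)))) :=
  (multipliable_one_sub_pow_succ hp).tendsto_prod_tprod_nat

lemma tprod_one_sub_pow_succ_ne_zero (hp : ‖p‖ < 1) : ∏' j : ℕ, (1 - p ^ (j + 1)) ≠ 0 := by
  have hsum : Summable fun j : ℕ => ‖-p ^ (j + 1)‖ := by
    simpa only [norm_neg, norm_pow] using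
      (summable_nat_add_iff 1).mpr (summable_geometric_of_lt_one (norm_nonneg p) hp)
  simpa only [sub_eq_add_neg] using tprod_one_add_ne_zero_of_summable
    (fun j => by simpa only [sub_eq_add_neg] using one_sub_pow_succ_ne_zero hp j) hsum

lemma tendsto_gaussBinom {ι : Type*} {l : Filter ι} {m k : ι → ℕ} (hp : ‖p‖ < 1)
    (hm : Tendsto m l atTop) (hk : Tendsto k l atTop) :
    Tendsto (fun i => gaussBinom p (m i + k i) (k i)) l (𝓝 (∏' j : ℕ, (1 - p ^ (j + 1)))⁻¹) := by
  have hφ := tprod_one_sub_pow_succ_ne_zero hp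
  have hlim := tendsto_qPochhammer hp
  have hquot := (hlim.comp (hm.atTop_add_atTop hk)).div ((hlim.comp hk).mul (hlim.comp hm))
    (mul_ne_zero hφ hφ)
  rw [div_mul_cancel_left₀ hφ] at hquot
  simp only [gaussBinom_add_eq_div hp]
  exact hquot

lemma exists_norm_gaussBinom_le (hp : ‖p‖ < 1) : ∃ B, ∀ n k, ‖gaussBinom p n k‖ ≤ B := by
  have hlim := tendsto_qPochhammer hp
  obtain ⟨A, hA⟩ := hlim.norm.bddAbove_range
  obtain ⟨A', hA'⟩ := (hlim.inv₀ (tprod_one_sub_pow_succ_ne_zero hp)).norm.bddAbove_range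
  replace hA : ∀ n, ‖qPochhammer p n‖ ≤ A := fun n => hA ⟨n, rfl⟩
  replace hA' : ∀ n, ‖(qPochhammer p n)⁻¹‖ ≤ A' := fun n => hA' ⟨n, rfl⟩
  have hA_nonneg : 0 ≤ A := (norm_nonneg _).trans (hA 0)
  have hA'_nonneg : 0 ≤ A' := (norm_nonneg _).trans (hA' 0)
  refine ⟨A * (A' * A'), fun n k => ?_⟩
  rcases lt_or_ge n k with hnk | hkn
  · rw [gaussBinom_eq_zero_of_lt p hnk, norm_zero]
    positivity
  · obtain ⟨m, rfl⟩ := Nat.exists_eq_add_of_le' hkn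
    rw [gaussBinom_add_eq_div hp, div_eq_mul_inv, mul_inv, norm_mul, norm_mul]
    gcongr
    exacts [hA _, hA' _, hA' _]

end NormedField

end GaussianBinomial

section TripleProduct

open scoped Topology
open Filter

lemma tendsto_sum_Icc_gaussBinom_mul {𝕜 : Type*} [NormedField 𝕜] [CompleteSpace 𝕜] {p : 𝕜}
    {t : ℤ → 𝕜} (hp : ‖p‖ < 1) (hsum : Summable fun n => ‖t n‖) :
    Tendsto (fun N : ℕ => ∑ n ∈ Icc (-N : ℤ) N,
        gaussBinom p ((N - n).toNat + (N + n).toNat) (N + n).toNat * t n) atTop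
      (𝓝 (∑' n, (∏' j : ℕ, (1 - p ^ (j + 1)))⁻¹ * t n)) := by
  obtain ⟨B, hB⟩ := exists_norm_gaussBinom_le hp
  simp only [sum_eq_tsum_indicator (L := .unconditional _)]
  refine tendsto_tsum_of_dominated_convergence (hsum.mul_left B) (fun n => ?_)
    (Eventually.of_forall fun N n => ?_)
  · have hsub : Tendsto (fun N : ℕ => ((N : ℤ) - n).toNat) atTop atTop :=
      tendsto_atTop.mpr fun b => (eventually_ge_atTop (b + n.natAbs)).mono fun N _ => by omega
    have hadd : Tendsto (fun N : ℕ => ((N : ℤ) + n).toNat) atTop atTop :=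
      tendsto_atTop.mpr fun b => (eventually_ge_atTop (b + n.natAbs)).mono fun N _ => by omega
    refine ((tendsto_gaussBinom hp hsub hadd).mul_const (t n)).congr' ?_
    filter_upwards [eventually_ge_atTop n.natAbs] with N hN
    rw [Set.indicator_of_mem]
    rw [coe_Icc, Set.mem_Icc]
    omega
  · refine (norm_indicator_le_norm_self _ _).trans ?_
    rw [norm_mul]
    gcongr
    exact hB _ _

/-- `t` is the coefficient sequence `t n = (-z)ⁿ p^{n(n-1)/2}` of the Jacobi triple product,
characterised by its recurrence to avoid halving exponents. -/
structure IsTripleProductCoeff {K : Type*} [Field K] (p z : K) (t : ℤ → K) : Prop where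
  zero : t 0 = 1
  add_one (n : ℤ) : t (n + 1) = -z * p ^ n * t n

namespace IsTripleProductCoeff

section Field

variable {K : Type*} [Field K] {p z : K} {t : ℤ → K}

lemma prod_range_one_sub_mul_pow (ht : IsTripleProductCoeff p z t) (M : ℕ) :
    ∏ j ∈ range M, (1 - z * p ^ j) = ∑ k ∈ range (M + 1), gaussBinom p M k * t k := by
  induction M with
  | zero => simp [gaussBinom_zero_right, ht.zero]
  | succ M ih =>
    rw [prod_range_succ, ih, sum_gaussBinom_succ, sum_mul]
    refine sum_congr rfl fun k hk => ?_
    have hpow : p ^ M = p ^ (M - k) * p ^ k := by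
      rw [← pow_add, Nat.sub_add_cancel (Nat.le_of_lt_succ (mem_range.mp hk))]
    rw [Nat.cast_succ, ht.add_one, zpow_natCast, hpow]
    ring

lemma prod_range_mul_prod_range (ht : IsTripleProductCoeff p z t) (hp : p ≠ 0) (hz : z ≠ 0)
    (M N : ℕ) :
    (∏ j ∈ range M, (1 - z * p ^ j)) * ∏ j ∈ range N, (1 - p ^ (j + 1) / z) =
      ∑ k ∈ range (M + N + 1), gaussBinom p (M + N) k * t (k - N) := by
  induction N with
  | zero => simpa using ht.prod_range_one_sub_mul_pow M
  | succ N ih =>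
    rw [prod_range_succ, ← mul_assoc, ih, ← add_assoc, sum_gaussBinom_succ', sum_mul]
    refine sum_congr rfl fun k _ => ?_
    have hrec := ht.add_one (k - N - 1)
    have hpow : p ^ (N + 1) * p ^ ((k : ℤ) - N - 1) = p ^ k := by
      rw [← zpow_natCast, ← zpow_natCast, ← zpow_add₀ hp]
      congr 1
      push_cast
      ring
    rw [sub_add_cancel] at hrec
    have hlower : p ^ (N + 1) / z * t (k - N) = -(p ^ k * t (k - N - 1)) := by
      rw [hrec, ← hpow]
      field_simp
    rw [show ((k + 1 : ℕ) : ℤ) - (N + 1 : ℕ) = k - N by push_cast; ring,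
      show (k : ℤ) - (N + 1 : ℕ) = k - N - 1 by push_cast; ring]
    linear_combination -gaussBinom p (M + N) k * hlower

lemma prod_range_eq_sum_Icc (ht : IsTripleProductCoeff p z t) (hp : p ≠ 0) (hz : z ≠ 0) (N : ℕ) :
    ∏ j ∈ range N, ((1 - z * p ^ j) * (1 - p ^ (j + 1) / z)) =
      ∑ n ∈ Icc (-N : ℤ) N, gaussBinom p ((N - n).toNat + (N + n).toNat) (N + n).toNat * t n := by
  rw [prod_mul_distrib, ht.prod_range_mul_prod_range hp hz]
  refine sum_nbij' (fun k : ℕ => (k : ℤ) - N) (fun n => (N + n).toNat) ?_ ?_ ?_ ?_ ?_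
  · intro k hk
    rw [mem_range] at hk
    rw [mem_Icc]
    omega
  · intro n hn
    rw [mem_Icc] at hn
    rw [mem_range]
    omega
  · intro k _
    omega
  · intro n hn
    rw [mem_Icc] at hn
    omega
  · intro k hk
    rw [mem_range] at hk
    congr 2 <;> omega

end Field

theorem Theta_eq_tsum {p z : ℂ} {t : ℤ → ℂ} (ht : IsTripleProductCoeff p z t) (hp₀ : p ≠ 0)
    (hp : ‖p‖ < 1) (hz : z ≠ 0) (hsum : Summable fun n => ‖t n‖) :
    Theta p z = ∑' n, t n := by
  have hmul := (multipliable_one_sub_mul_pow hp z).mul (multipliable_one_sub_pow_succ_div hp z)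
  have hlim : ∏' j : ℕ, ((1 - z * p ^ j) * (1 - p ^ (j + 1) / z)) =
      ∑' n, (∏' j : ℕ, (1 - p ^ (j + 1)))⁻¹ * t n := by
    refine tendsto_nhds_unique hmul.tendsto_prod_tprod_nat ?_
    simpa only [ht.prod_range_eq_sum_Icc hp₀ hz] using tendsto_sum_Icc_gaussBinom_mul hp hsum
  rw [Theta, hmul.tprod_mul (multipliable_one_sub_pow_succ hp), hlim, tsum_mul_left, mul_comm,
    mul_inv_cancel_left₀ (tprod_one_sub_pow_succ_ne_zero hp)]

end IsTripleProductCoeff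

end TripleProduct

section ThetaSeries

open scoped Real

lemma norm_exp_two_pi_I_mul_lt_one {σ : ℂ} (hσ : 0 < σ.im) : ‖exp (2 * π * I * σ)‖ < 1 :=
  UpperHalfPlane.norm_exp_two_pi_I_lt_one ⟨σ, hσ⟩

lemma isTripleProductCoeff_jacobiTheta₂_term (w σ : ℂ) :
    IsTripleProductCoeff (exp (2 * π * I * σ)) (exp (2 * π * I * w))
      fun n => jacobiTheta₂_term n (w - σ / 2 + 1 / 2) σ where
  zero := by simp [jacobiTheta₂_term]
  add_one n := by
    rw [jacobiTheta₂_term, jacobiTheta₂_term, ← exp_int_mul, neg_mul, neg_mul, ← exp_add, ← exp_add,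
      ← exp_add_pi_mul_I]
    congr 1
    push_cast
    ring

theorem Theta_exp_eq_jacobiTheta₂ (w : ℂ) {σ : ℂ} (hσ : 0 < σ.im) :
    Theta (exp (2 * π * I * σ)) (exp (2 * π * I * w)) = jacobiTheta₂ (w - σ / 2 + 1 / 2) σ :=
  (isTripleProductCoeff_jacobiTheta₂_term w σ).Theta_eq_tsum (exp_ne_zero _)
    (norm_exp_two_pi_I_mul_lt_one hσ) (exp_ne_zero _)
    ((summable_jacobiTheta₂_term_iff _ σ).mpr hσ).norm

lemma Theta_eq_one_sub_mul_tprod {p : ℂ} (hp : ‖p‖ < 1) (z : ℂ) :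
    Theta p z = (1 - z) * (∏' n : ℕ, (1 - p ^ (n + 1))) *
      ∏' n : ℕ, ((1 - z * p ^ (n + 1)) * (1 - p ^ (n + 1) / z)) := by
  have hmul := multipliable_one_sub_mul_pow hp z
  have hmul_succ := multipliable_one_sub_mul_pow_succ hp z
  have hmul_div := multipliable_one_sub_pow_succ_div hp z
  rw [Theta, (hmul.mul hmul_div).tprod_mul (multipliable_one_sub_pow_succ hp),
    hmul.tprod_mul hmul_div, hmul_succ.tprod_mul hmul_div,
    tprod_eq_zero_mul' (f := fun n => 1 - z * p ^ n) hmul_succ, pow_zero, mul_one]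
  ring

lemma one_sub_two_mul_cos_add_sq (v q : ℂ) :
    1 - 2 * q * cos (2 * π * v) + q ^ 2 =
      (1 - exp (2 * π * I * v) * q) * (1 - q / exp (2 * π * I * v)) := by
  have hcos : 2 * cos (2 * π * v) = exp (2 * π * I * v) + (exp (2 * π * I * v))⁻¹ := by
    rw [two_cos, ← exp_neg]
    ring_nf
  have hz := exp_ne_zero (2 * π * I * v)
  rw [mul_right_comm, hcos]
  field_simp
  ring

lemma two_mul_exp_mul_sin (v σ : ℂ) :
    2 * exp (2 * π * I * σ / 8) * sin (π * v) =
      I * exp (π * I * (σ / 4 - v)) * (1 - exp (2 * π * I * v)) := by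
  have hneg : exp (π * I * (σ / 4 - v)) = exp (2 * π * I * σ / 8) * exp (-(π * v) * I) := by
    rw [← exp_add]
    ring_nf
  have hpos : exp (2 * π * I * v) * exp (-(π * v) * I) = exp (π * v * I) := by
    rw [← exp_add]
    ring_nf
  rw [sin, hneg, ← hpos]
  ring

lemma th1_eq_Theta (v : ℂ) {σ : ℂ} (hσ : 0 < σ.im) :
    th1 v σ = I * exp (π * I * (σ / 4 - v)) *
      Theta (exp (2 * π * I * σ)) (exp (2 * π * I * v)) := by
  rw [Theta_eq_one_sub_mul_tprod (norm_exp_two_pi_I_mul_lt_one hσ), th1]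
  simp only [pow_mul', one_sub_two_mul_cos_add_sq]
  rw [← mul_assoc, ← mul_assoc, ← two_mul_exp_mul_sin]
  ring

lemma th1_eq_jacobiTheta₂ (v : ℂ) {σ : ℂ} (hσ : 0 < σ.im) :
    th1 v σ = I * exp (π * I * (σ / 4 - v)) * jacobiTheta₂ (v - σ / 2 + 1 / 2) σ := by
  rw [th1_eq_Theta v hσ, Theta_exp_eq_jacobiTheta₂ v hσ]

lemma th3_eq_jacobiTheta₂ (v : ℂ) {σ : ℂ} (hσ : 0 < σ.im) : th3 v σ = jacobiTheta₂ v σ := by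
  have hexp : exp (π * I * (v + σ / 4)) * (I * exp (π * I * (σ / 4 - (v + (σ + 1) / 2)))) = 1 := by
    rw [mul_left_comm, ← exp_add, show π * I * (v + σ / 4) + π * I * (σ / 4 - (v + (σ + 1) / 2)) =
      -(π / 2 * I) by ring, exp_neg, exp_pi_div_two_mul_I, mul_inv_cancel₀ I_ne_zero]
  rw [th3, th1_eq_jacobiTheta₂ _ hσ, show v + (σ + 1) / 2 - σ / 2 + 1 / 2 = v + 1 by ring,
    jacobiTheta₂_add_left, ← mul_assoc, hexp, one_mul]

lemma th1_neg (v σ : ℂ) : th1 (-v) σ = -th1 v σ := by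
  simp [th1]

lemma th1_add_one (v σ : ℂ) : th1 (v + 1) σ = -th1 v σ := by
  simp only [th1, mul_add, mul_one, sin_add_pi, cos_add_two_pi]
  ring

lemma th0_eq_th3_add_half (v σ : ℂ) : th0 v σ = th3 (v + 1 / 2) σ := by
  have hexp : exp (π * I * (v + 1 / 2 + σ / 4)) = I * exp (π * I * (v + σ / 4)) := by
    rw [show π * I * (v + 1 / 2 + σ / 4) = π / 2 * I + π * I * (v + σ / 4) by ring, exp_add,
      exp_pi_div_two_mul_I]
  rw [th0, th3, show v + 1 / 2 + (σ + 1) / 2 = v + σ / 2 + 1 by ring, th1_add_one, hexp]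
  ring

lemma hasSum_th3 (v : ℂ) {σ : ℂ} (hσ : 0 < σ.im) :
    HasSum (fun n : ℤ => jacobiTheta₂_term n v σ) (th3 v σ) := by
  rw [th3_eq_jacobiTheta₂ v hσ]
  exact hasSum_jacobiTheta₂_term v hσ

lemma hasSum_th0 (v : ℂ) {σ : ℂ} (hσ : 0 < σ.im) :
    HasSum (fun n : ℤ => (-1) ^ n * jacobiTheta₂_term n v σ) (th0 v σ) := by
  rw [th0_eq_th3_add_half]
  refine (hasSum_th3 (v + 1 / 2) hσ).congr_fun fun n => ?_
  rw [jacobiTheta₂_term, jacobiTheta₂_term, ← exp_pi_mul_I, ← exp_int_mul, ← exp_add]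
  ring_nf

lemma hasSum_th1 (v : ℂ) {σ : ℂ} (hσ : 0 < σ.im) :
    HasSum (fun n : ℤ => I * (-1) ^ n * exp (π * I * ((2 * n - 1) * v + (n - 1 / 2) ^ 2 * σ)))
      (th1 v σ) := by
  rw [th1_eq_jacobiTheta₂ v hσ]
  refine ((hasSum_jacobiTheta₂_term (v - σ / 2 + 1 / 2) hσ).mul_left _).congr_fun fun n => ?_
  rw [jacobiTheta₂_term, mul_assoc, mul_assoc I, ← exp_add, ← exp_pi_mul_I, ← exp_int_mul,
    ← exp_add]
  ring_nf

end ThetaSeries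

section ThetaProduct

open scoped Real

lemma injective_add_sub_one_sub :
    Function.Injective fun jk : ℤ × ℤ => (jk.1 + jk.2 - 1, jk.1 - jk.2) := by
  rintro ⟨j, k⟩ ⟨j', k'⟩ h
  simp only [Prod.mk.injEq] at h ⊢
  omega

lemma mem_range_add_sub_one_sub {m n : ℤ} (h : Odd (m + n)) :
    (m, n) ∈ Set.range fun jk : ℤ × ℤ => (jk.1 + jk.2 - 1, jk.1 - jk.2) := by
  obtain ⟨k, hk⟩ := h
  refine ⟨(k + 1, k + 1 - n), ?_⟩
  simp only [Prod.mk.injEq]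
  omega

lemma neg_one_zpow_eq_of_even_add {K : Type*} [DivisionRing K] {m n : ℤ} (h : Even (m + n)) :
    (-1 : K) ^ m = (-1) ^ n := by
  rw [neg_one_zpow_eq_ite, neg_one_zpow_eq_ite]
  simp only [Int.even_add.mp h]

lemma neg_one_zpow_sub_sub_neg_one_zpow_add_sub_one {K : Type*} [DivisionRing K] (j k : ℤ) :
    (-1 : K) ^ (j - k) - (-1) ^ (j + k - 1) = 2 * (-1) ^ (j + k) := by
  have hodd : (-1 : K) ^ (j + k - 1) = -(-1) ^ (j + k) := by
    rw [zpow_sub_one₀ (neg_ne_zero.mpr one_ne_zero), inv_neg_one, mul_neg_one]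
  rw [hodd, neg_one_zpow_eq_of_even_add (⟨j, by ring⟩ : Even (j - k + (j + k))), sub_neg_eq_add,
    two_mul]

lemma jacobiTheta₂_term_mul_jacobiTheta₂_term (x y τ : ℂ) (j k : ℤ) :
    jacobiTheta₂_term (j + k - 1) (x + y) (τ / 2) * jacobiTheta₂_term (j - k) (x - y) (τ / 2) =
      exp (π * I * ((2 * j - 1) * (2 * x) + (j - 1 / 2) ^ 2 * τ)) *
        exp (π * I * ((2 * k - 1) * (2 * y) + (k - 1 / 2) ^ 2 * τ)) := by
  rw [jacobiTheta₂_term, jacobiTheta₂_term, ← exp_add, ← exp_add]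
  congr 1
  push_cast
  ring

/-- Multiplied out, the left side is a double series over `(m, n)` with coefficient
`(-1)ⁿ - (-1)ᵐ`, so only `m + n` odd contributes; `m = j + k - 1`, `n = j - k` then separates the
variables `x` and `y`. -/
theorem th3_mul_th0_sub_th0_mul_th3 (x y : ℂ) {τ : ℂ} (hτ : 0 < τ.im) :
    th3 (x + y) (τ / 2) * th0 (x - y) (τ / 2) - th0 (x + y) (τ / 2) * th3 (x - y) (τ / 2) =
      -2 * (th1 (2 * x) τ * th1 (2 * y) τ) := by
  have hτ2 : 0 < (τ / 2).im := by simpa using hτ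
  have hmul {f g : ℤ → ℂ} {s t : ℂ} (hf : HasSum f s) (hg : HasSum g t) :
      HasSum (fun mn : ℤ × ℤ => f mn.1 * g mn.2) (s * t) :=
    hf.mul hg (summable_mul_of_summable_norm hf.summable.norm hg.summable.norm)
  have hleft := (hmul (hasSum_th3 (x + y) hτ2) (hasSum_th0 (x - y) hτ2)).sub
    (hmul (hasSum_th0 (x + y) hτ2) (hasSum_th3 (x - y) hτ2))
  have hright := (hmul (hasSum_th1 (2 * x) hτ) (hasSum_th1 (2 * y) hτ)).mul_left (-2)
  rw [← injective_add_sub_one_sub.hasSum_iff] at hleft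
  · refine hleft.unique (hright.congr_fun fun ⟨j, k⟩ => ?_)
    have hsign := neg_one_zpow_sub_sub_neg_one_zpow_add_sub_one (K := ℂ) j k
    have hterm := jacobiTheta₂_term_mul_jacobiTheta₂_term x y τ j k
    rw [zpow_add₀ (neg_ne_zero.mpr one_ne_zero)] at hsign
    dsimp only [Function.comp_apply]
    rw [mul_mul_mul_comm, mul_mul_mul_comm I, I_mul_I, ← hterm]
    linear_combination jacobiTheta₂_term (j + k - 1) (x + y) (τ / 2) *
      jacobiTheta₂_term (j - k) (x - y) (τ / 2) * hsign
  · rintro ⟨m, n⟩ hmn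
    have hsign := neg_one_zpow_eq_of_even_add (K := ℂ)
      (Int.not_odd_iff_even.mp (mt mem_range_add_sub_one_sub hmn))
    dsimp only
    rw [hsign]
    ring

end ThetaProduct

section ModularTransformation

open scoped Real

lemma neg_one_div_im_pos {τ : ℂ} (hτ : 0 < τ.im) : 0 < (-1 / τ).im := by
  rw [neg_div, one_div, ← inv_neg]
  simpa using UpperHalfPlane.im_inv_neg_coe_pos ⟨τ, hτ⟩

lemma neg_I_mul_cpow_one_half {τ : ℂ} (hτ : 0 < τ.im) :
    (-I * τ) ^ (1 / 2 : ℂ) = exp (-π * I / 4) * τ ^ (1 / 2 : ℂ) := by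
  have hτ₀ : τ ≠ 0 := UpperHalfPlane.ne_zero ⟨τ, hτ⟩
  have harg : arg (-I) + arg τ ∈ Set.Ioc (-π) π := by
    have harg_nonneg := arg_nonneg_iff.mpr hτ.le
    have harg_le := arg_le_pi τ
    rw [arg_neg_I, Set.mem_Ioc]
    constructor <;> linarith [Real.pi_pos]
  rw [cpow_def_of_ne_zero (mul_ne_zero (neg_ne_zero.mpr I_ne_zero) hτ₀), cpow_def_of_ne_zero hτ₀,
    log_mul (neg_ne_zero.mpr I_ne_zero) hτ₀ harg, log_neg_I, ← exp_add]
  ring_nf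

lemma Theta_neg_one_div (v : ℂ) {τ : ℂ} (hτ : 0 < τ.im) :
    Theta (exp (2 * π * I * (-1 / τ))) (exp (2 * π * I * (-v / τ))) =
      (-I * τ) ^ (1 / 2 : ℂ) * exp (π * I * (v - 1 / 2) ^ 2 / τ) * th1 v τ := by
  have hτ₀ : τ ≠ 0 := UpperHalfPlane.ne_zero ⟨τ, hτ⟩
  have hroot : (-I * τ) ^ (1 / 2 : ℂ) * (1 / (-I * τ) ^ (1 / 2 : ℂ)) = 1 :=
    mul_one_div_cancel (by simp [cpow_eq_zero_iff, hτ₀])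
  have hmodular := jacobiTheta₂_functional_equation (-v + 1 / 2 + τ / 2) τ
  have harg : (-v + 1 / 2 + τ / 2) / τ = -v / τ - -1 / τ / 2 + 1 / 2 := by
    field_simp
    ring
  have hreflect : jacobiTheta₂ (-v + 1 / 2 + τ / 2) τ = jacobiTheta₂ (v - τ / 2 + 1 / 2) τ := by
    rw [← jacobiTheta₂_neg_left, ← jacobiTheta₂_add_left]
    ring_nf
  have hexp : I * (exp (π * I * (v - 1 / 2) ^ 2 / τ) * exp (π * I * (τ / 4 - v)) *
      exp (-π * I * (-v + 1 / 2 + τ / 2) ^ 2 / τ)) = 1 := by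
    rw [← exp_add, ← exp_add, show π * I * (v - 1 / 2) ^ 2 / τ + π * I * (τ / 4 - v) +
      -π * I * (-v + 1 / 2 + τ / 2) ^ 2 / τ = -(π / 2 * I) by field_simp; ring, exp_neg,
      exp_pi_div_two_mul_I, mul_inv_cancel₀ I_ne_zero]
  rw [harg, hreflect] at hmodular
  rw [Theta_exp_eq_jacobiTheta₂ _ (neg_one_div_im_pos hτ), th1_eq_jacobiTheta₂ v hτ, hmodular]
  generalize jacobiTheta₂ (-v / τ - -1 / τ / 2 + 1 / 2) (-1 / τ) = J
  generalize (-I * τ) ^ (1 / 2 : ℂ) = R at hroot ⊢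
  linear_combination -J * hroot - J * R * (1 / R) * hexp

lemma xp_two_mul (τ : ℂ) (r : ℝ) (u : ℂ) :
    xp τ r (2 * u) = exp (2 * π * I * (-(u / r) / τ)) := by
  rw [xp]
  congr 1
  field_simp

theorem br_eq_Cc_mul_th1 {τ : ℂ} (hτ : 0 < τ.im) {r : ℝ} (hr : r ≠ 0) (u : ℂ) :
    br τ r u = Cc τ r * th1 (u / r) τ := by
  have hr₀ : (r : ℂ) ≠ 0 := ofReal_ne_zero.mpr hr
  have hτ₀ : τ ≠ 0 := UpperHalfPlane.ne_zero ⟨τ, hτ⟩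
  have hexp : xp τ r (u ^ 2 / r - u) * exp (π * I * (u / r - 1 / 2) ^ 2 / τ) = xp τ r (-r / 4) := by
    rw [xp, xp, ← exp_add]
    congr 1
    field_simp
    ring
  rw [br, xp_two_mul, xp_two_mul, div_self hr₀, Theta_neg_one_div _ hτ,
    neg_I_mul_cpow_one_half hτ, Cc, ← hexp]
  ring

end ModularTransformation

lemma sum_psiStar_mul_psi (τ : ℂ) (r : ℝ) (a b c : ℤ) (u : ℂ) :
    ∑ ε ∈ ({1, -1} : Finset ℤ), psiStar τ r u ε a b * psi τ r u ε b c =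
      -(a - b) * Cc τ r ^ 2 / (2 * br τ r b * br τ r u) *
        (th3 (((a - b) * (u - 1) + a) / (2 * r)) (τ / 2) *
            th0 (((b - c) * u + b) / (2 * r)) (τ / 2) -
          th0 (((a - b) * (u - 1) + a) / (2 * r)) (τ / 2) *
            th3 (((b - c) * u + b) / (2 * r)) (τ / 2)) := by
  rw [sum_pair (by decide)]
  simp only [psiStar, psi, neg_neg, if_true, if_neg (by decide : ¬(-1 : ℤ) = 1)]
  push_cast
  ring

lemma intCast_mul_th1_intCast_mul {s : ℤ} (hs : |s| = 1) (v σ : ℂ) :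
    s * th1 (s * v) σ = th1 v σ := by
  rcases eq_or_eq_neg_of_abs_eq hs with rfl | rfl <;> simp [th1_neg]

theorem Cc_sq_mul_th3_mul_th0_sub_th0_mul_th3 {τ : ℂ} (hτ : 0 < τ.im) {r : ℝ} (hr : r ≠ 0) {s : ℤ}
    (hs : |s| = 1) (v u : ℂ) :
    s * Cc τ r ^ 2 * (th3 ((v + s * u) / (2 * r)) (τ / 2) * th0 ((v - s * u) / (2 * r)) (τ / 2) -
        th0 ((v + s * u) / (2 * r)) (τ / 2) * th3 ((v - s * u) / (2 * r)) (τ / 2)) =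
      -(2 * br τ r v * br τ r u) := by
  rw [add_div, sub_div, th3_mul_th0_sub_th0_mul_th3 _ _ hτ, br_eq_Cc_mul_th1 hτ hr,
    br_eq_Cc_mul_th1 hτ hr, ← intCast_mul_th1_intCast_mul hs (u / r),
    show 2 * (v / (2 * r)) = v / r by ring, show 2 * (s * u / (2 * r)) = s * (u / r) by ring]
  ring

/-- First inversion relation for intertwining vectors. -/
theorem inversion_first (τ : ℂ) (r : ℝ) (hτ : 0 < τ.im) (hr : 0 < r)
    (a b c : ℤ) (hab : |a - b| = 1) (hbc : |b - c| = 1) (u : ℂ)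
    (hu : br τ r u ≠ 0) (hb : br τ r (b : ℂ) ≠ 0) :
    ∑ ε ∈ ({1, -1} : Finset ℤ), psiStar τ r u ε a b * psi τ r u ε b c =
      if a = c then 1 else 0 := by
  rw [sum_psiStar_mul_psi]
  split_ifs with hac
  · subst c
    have hprod := Cc_sq_mul_th3_mul_th0_sub_th0_mul_th3 hτ hr.ne' hab b u
    push_cast at hprod
    rw [show (a - b) * (u - 1) + a = b + (a - b) * u by ring,
      show (b - a) * u + b = b - (a - b) * u by ring]
    field_simp
    linear_combination -hprod
  · have hc : c = 2 * b - a := by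
      rcases eq_or_eq_neg_of_abs_eq hab with hab | hab <;>
        rcases eq_or_eq_neg_of_abs_eq hbc with hbc | hbc <;> omega
    have harg : (b - c) * u + b = (a - b) * (u - 1) + a := by
      rw [hc]
      push_cast
      ring
    rw [harg]
    ring

end Ell
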